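/- Let l be a monic irreducible polynomial of A such that φ has good reduction at the primes of L lying over l and l is unramified in the maximal separable subextension L_s/k. The map H_{l,Γ} × Γ → Λ_l^φ given by (σ, a) ↦ ⟨σ, a⟩ = σα − α (where φ_l(α) = a) is A-bilinear; its kernel on the left is {1} and its kernel on the right is Γ ∩ φ_l(L_l). -/

import Mathlib

open Polynomial IntermediateField

set_option synthInstance.maxHeartbeats 1000000
set_option maxHeartbeats 1000000

/-- `φ` is a rank one Drinfeld `A = 𝔽_q[T]`-module defined over the finite extension
`L` of `k = 𝔽_q(T)` (viewed as an `A`-field of generic characteristic): a ring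
homomorphism `A → End_{𝔽_q}(k̄, +)` with `φ_T(X) = TX + aX^q` for some nonzero
`a ∈ L`, and `φ_c(X) = cX` for constants `c ∈ 𝔽_q`. -/
def IsDrinfeldRankOne {Fq : Type} [Field Fq] [Fintype Fq]
    (L : IntermediateField (RatFunc Fq) (AlgebraicClosure (RatFunc Fq)))
    (φ : Polynomial Fq →+* AddMonoid.End (AlgebraicClosure (RatFunc Fq))) : Prop :=
  ∃ a : AlgebraicClosure (RatFunc Fq), a ∈ L ∧ a ≠ 0 ∧
    (∀ α, φ X α = algebraMap (RatFunc Fq) (AlgebraicClosure (RatFunc Fq)) RatFunc.X * α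
        + a * α ^ Fintype.card Fq) ∧
    (∀ (c : Fq) (α), φ (C c) α
        = algebraMap (RatFunc Fq) (AlgebraicClosure (RatFunc Fq)) (RatFunc.C c) * α)

/-- An automorphism `τ ∈ Gal(E/L)` fixes the `l`-torsion points `Λ_l^φ` pointwise; when
`E ⊇ L_l = L(Λ_l^φ)` this says exactly `τ ∈ Gal(E/L_l)`. -/
def FixesTorsionD {Fq : Type} [Field Fq] [Fintype Fq]
    {L : IntermediateField (RatFunc Fq) (AlgebraicClosure (RatFunc Fq))}
    (φ : Polynomial Fq →+* AddMonoid.End (AlgebraicClosure (RatFunc Fq)))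
    (l : Polynomial Fq)
    {E : IntermediateField (↥L) (AlgebraicClosure (RatFunc Fq))}
    (τ : ↥E ≃ₐ[↥L] ↥E) : Prop :=
  ∀ x : ↥E, φ l (x : AlgebraicClosure (RatFunc Fq)) = 0 → τ x = x

/-- An automorphism `s ∈ Gal(E/L)` is an extension of `σ_u ∈ Gal(L_l/L)`, i.e. it acts
on the `l`-torsion points `Λ_l^φ ⊆ E` by `λ ↦ φ_u(λ)`. -/
def ExtendsSigmaD {Fq : Type} [Field Fq] [Fintype Fq]
    {L : IntermediateField (RatFunc Fq) (AlgebraicClosure (RatFunc Fq))}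
    (φ : Polynomial Fq →+* AddMonoid.End (AlgebraicClosure (RatFunc Fq)))
    (l : Polynomial Fq)
    {E : IntermediateField (↥L) (AlgebraicClosure (RatFunc Fq))}
    (s : ↥E ≃ₐ[↥L] ↥E) (u : Polynomial Fq) : Prop :=
  ∀ x : ↥E, φ l (x : AlgebraicClosure (RatFunc Fq)) = 0 →
    ((s x : AlgebraicClosure (RatFunc Fq))) = φ u (x : AlgebraicClosure (RatFunc Fq))

/-- `c` is the natural `A`-action on `Gal(E/L_l)`, defined via decompositions: for
`f ≡ f_1 + ⋯ + f_n (mod l)` with all `gcd(f_i, l) = 1` and extensions `s_i` of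
`σ_{f_i} ∈ Gal(L_l/L)`, one has `c f τ = Σ_i s_i ∘ τ ∘ s_i⁻¹` (conjugation action). -/
def IsDecompConjActionD {Fq : Type} [Field Fq] [Fintype Fq]
    {L : IntermediateField (RatFunc Fq) (AlgebraicClosure (RatFunc Fq))}
    (φ : Polynomial Fq →+* AddMonoid.End (AlgebraicClosure (RatFunc Fq)))
    (l : Polynomial Fq)
    {E : IntermediateField (↥L) (AlgebraicClosure (RatFunc Fq))}
    (c : Polynomial Fq → (↥E ≃ₐ[↥L] ↥E) → (↥E ≃ₐ[↥L] ↥E)) : Prop :=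
  ∀ (f : Polynomial Fq) (τ : ↥E ≃ₐ[↥L] ↥E), FixesTorsionD φ l τ →
    ∀ (n : ℕ) (g : Fin n → Polynomial Fq), (∀ i, IsCoprime (g i) l) →
      l ∣ (f - ∑ i, g i) →
      ∀ s : Fin n → (↥E ≃ₐ[↥L] ↥E), (∀ i, ExtendsSigmaD φ l (s i) (g i)) →
        c f τ = (List.ofFn (fun i => s i * τ * (s i)⁻¹)).prod

/-- Stand-in for the standing hypotheses on `l` in Section 3: `l` is a monic
irreducible polynomial of `A` such that (a) `φ` has good reduction at the primes of `L`
lying over `l`, and (b) `l` is unramified in the maximal separable subextension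
`L_s/k`.  By `[Goss, Theorem 7.7.1]` these conditions yield exactly that
`Gal(L(Λ_l^φ)/L) ≅ (A/lA)^*`, every element being of the form
`σ_u : λ ↦ φ_u(λ)` with `u` prime to `l`; we take this description of the Galois group
of `L_l = L(Λ_l^φ)` over `L` as the formal content of the hypotheses (a) and (b). -/
def GaloisGroupOfTorsionIsFull {Fq : Type} [Field Fq] [Fintype Fq]
    {L : IntermediateField (RatFunc Fq) (AlgebraicClosure (RatFunc Fq))}
    (φ : Polynomial Fq →+* AddMonoid.End (AlgebraicClosure (RatFunc Fq)))
    (l : Polynomial Fq)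
    (Ll : IntermediateField (↥L) (AlgebraicClosure (RatFunc Fq))) : Prop :=
  (∀ σ : ↥Ll ≃ₐ[↥L] ↥Ll, ∃ u : Polynomial Fq, ¬ l ∣ u ∧
    ∀ x : ↥Ll, φ l (x : AlgebraicClosure (RatFunc Fq)) = 0 →
      ((σ x : AlgebraicClosure (RatFunc Fq))) = φ u (x : AlgebraicClosure (RatFunc Fq))) ∧
  (∀ u : Polynomial Fq, ¬ l ∣ u → ∃ σ : ↥Ll ≃ₐ[↥L] ↥Ll,
    ∀ x : ↥Ll, φ l (x : AlgebraicClosure (RatFunc Fq)) = 0 →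
      ((σ x : AlgebraicClosure (RatFunc Fq))) = φ u (x : AlgebraicClosure (RatFunc Fq)))

/-!
Let `φ` be an action of `A` on the additive group by polynomials over `L`, `φ_f` having derivative
the constant `f`. If `l ≠ 0` in `L`, then `φ_l(X) - a` is separable for every `a ∈ L`, so `(1/l)Γ`
generates a Galois extension `E` of `L`. Two roots of `φ_l(X) = a` differ by a torsion point, so
`⟨σ, a⟩` is well defined for `σ` fixing the torsion, and the linearity statements follow because
`φ` commutes with `Gal(E/L)`; in the first variable, conjugation by an extension of `σ_u`
corresponds to `φ_u`. The left kernel is trivial because `E` is generated by `(1/l)Γ`, and the right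
kernel is computed by the Galois correspondence for the subgroup of `Gal(E/L)` fixing the torsion.
-/

theorem separable_sub_C_of_derivative_eq_C {R : Type*} [CommRing R] {P : R[X]} {c : R}
    (hP : derivative P = C c) (hc : IsUnit c) (b : R) : (P - C b).Separable := by
  rw [separable_def, derivative_sub, derivative_C, sub_zero, hP]
  exact isCoprime_one_right.of_isCoprime_of_dvd_right (isUnit_C.2 hc).dvd

theorem degree_ne_zero_of_derivative_ne_zero {R : Type*} [Semiring R] {P : R[X]}
    (hP : derivative P ≠ 0) : P.degree ≠ 0 :=
  fun h => hP <| by rw [eq_C_of_degree_eq_zero h, derivative_C]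

theorem action_apply_comm {A M : Type*} [CommSemiring A] [AddCommMonoid M]
    (φ : A →+* AddMonoid.End M) (f g : A) (x : M) : φ f (φ g x) = φ g (φ f x) :=
  DFunLike.congr_fun ((Commute.all f g).map φ).eq x

theorem isCoprime_of_isMaximal_span_singleton {R : Type*} [CommRing R] {f l : R}
    (hl : (Ideal.span {l}).IsMaximal) (hf : ¬ l ∣ f) : IsCoprime f l := by
  rw [← Ideal.isCoprime_span_singleton_iff, Ideal.isCoprime_iff_codisjoint]
  exact (hl.out.not_le_iff_codisjoint.1 (mt Ideal.span_singleton_le_span_singleton.1 hf)).symm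

section PolynomialAction

variable {A L Ω : Type*} [CommRing A] [Field L] [Field Ω] [Algebra L Ω]

/-- Every `f : A` acts on `Ω` by a polynomial with coefficients in `L`. -/
def IsPolynomialAction (L : Type*) [Field L] [Algebra L Ω] (φ : A →+* AddMonoid.End Ω) : Prop :=
  ∀ f, ∃ P : L[X], ∀ x, φ f x = aeval x P

variable {φ : A →+* AddMonoid.End Ω}

namespace IsPolynomialAction

theorem apply_eq_of_apply_eq (hφ : IsPolynomialAction L φ) (f : A) {M : Type*} [Field M]
    [Algebra L M] (i j : M →ₐ[L] Ω) {x y : M} (h : φ f (i x) = i y) : φ f (j x) = j y := by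
  obtain ⟨P, hP⟩ := hφ f
  rw [hP, aeval_algHom_apply] at h ⊢
  rw [i.injective h]

theorem apply_algHom_eq_algebraMap (hφ : IsPolynomialAction L φ) {f : A} {x : Ω} {a : L}
    (h : φ f x = algebraMap L Ω a) (σ : Ω →ₐ[L] Ω) : φ f (σ x) = algebraMap L Ω a := by
  rw [← σ.commutes]
  exact hφ.apply_eq_of_apply_eq f (AlgHom.id L Ω) σ h

theorem apply_mem (hφ : IsPolynomialAction L φ) (f : A) {E : IntermediateField L Ω} {x : Ω}
    (hx : x ∈ E) : φ f x ∈ E := by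
  obtain ⟨P, hP⟩ := hφ f
  rw [hP, aeval_coe E (⟨x, hx⟩ : E)]
  exact SetLike.coe_mem _

end IsPolynomialAction

/-- The field `L((1/l)Γ)`, which is `L_{l,Γ}` and for `Γ = 0` is the torsion field `L_l`. -/
def divisionField (L : Type*) [Field L] [Algebra L Ω] (φ : A →+* AddMonoid.End Ω) (l : A)
    (Γ : AddSubgroup Ω) : IntermediateField L Ω :=
  adjoin L {x | φ l x ∈ Γ}

variable {l : A} {Γ : AddSubgroup Ω}

theorem mem_divisionField {x : Ω} (hx : φ l x ∈ Γ) : x ∈ divisionField L φ l Γ :=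
  subset_adjoin _ _ hx

theorem mem_divisionField_bot {x : Ω} (hx : φ l x = 0) : x ∈ divisionField L φ l ⊥ :=
  mem_divisionField (AddSubgroup.mem_bot.2 hx)

theorem divisionField_mono {Γ' : AddSubgroup Ω} (h : Γ ≤ Γ') :
    divisionField L φ l Γ ≤ divisionField L φ l Γ' :=
  adjoin.mono _ _ _ fun _ hx => h hx

theorem IsPolynomialAction.normal_divisionField [Normal L Ω] (hφ : IsPolynomialAction L φ)
    (hΓ : (Γ : Set Ω) ⊆ Set.range (algebraMap L Ω)) : Normal L (divisionField L φ l Γ) := by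
  refine normal_iff_forall_map_le.2 fun σ => ?_
  rw [divisionField, adjoin_map]
  refine adjoin.mono _ _ _ ?_
  rintro _ ⟨x, hx : φ l x ∈ Γ, rfl⟩
  obtain ⟨a, ha⟩ := hΓ hx
  change φ l (σ x) ∈ Γ
  rwa [hφ.apply_algHom_eq_algebraMap ha.symm, ha]

/-- The automorphisms of `E` fixing the `l`-torsion points in `E`. If `E` contains `L_l`, this is
`Gal(E/L_l)`, and for `E = L_{l,Γ}` it is `H_{l,Γ}`. -/
def torsionFixingSubgroup (φ : A →+* AddMonoid.End Ω) (l : A) (E : IntermediateField L Ω) :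
    Subgroup Gal(E/L) where
  carrier := {σ | ∀ x : E, φ l (x : Ω) = 0 → σ x = x}
  one_mem' _ _ := rfl
  mul_mem' {σ τ} hσ hτ x hx := by rw [AlgEquiv.mul_apply, hτ x hx, hσ x hx]
  inv_mem' {σ} hσ x hx := σ.symm_apply_eq.2 (hσ x hx).symm

/-- `s` acts on the `l`-torsion points of `E` as `u`, i.e. it extends `σ_u ∈ Gal(L_l/L)`. -/
def ActsOnTorsionAs (φ : A →+* AddMonoid.End Ω) (l : A) {E : IntermediateField L Ω}
    (s : Gal(E/L)) (u : A) : Prop :=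
  ∀ x : E, φ l (x : Ω) = 0 → (s x : Ω) = φ u (x : Ω)

/-- `c` is the `A`-action on `H_{l,Γ}` induced from conjugation by `Gal(L_l/L) ≅ (A/lA)ˣ`: if
`f ≡ ∑ gᵢ (mod l)` with all `gᵢ` prime to `l`, and `sᵢ` extends `σ_{gᵢ}`, then `f` acts on `H_{l,Γ}`
(written multiplicatively) by `τ ↦ ∏ sᵢ τ sᵢ⁻¹`. -/
def IsConjAction (φ : A →+* AddMonoid.End Ω) (l : A) {E : IntermediateField L Ω}
    (c : A → Gal(E/L) → Gal(E/L)) : Prop :=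
  ∀ (f : A), ∀ τ ∈ torsionFixingSubgroup φ l E, ∀ (n : ℕ) (g : Fin n → A),
    (∀ i, IsCoprime (g i) l) → l ∣ f - ∑ i, g i →
    ∀ s : Fin n → Gal(E/L), (∀ i, ActsOnTorsionAs φ l (s i) (g i)) →
      c f τ = (List.ofFn fun i => s i * τ * (s i)⁻¹).prod

variable {E : IntermediateField L Ω}

namespace IsConjAction

variable {c : A → Gal(E/L) → Gal(E/L)} {f : A} {σ s : Gal(E/L)}

theorem eq_one_of_dvd (hc : IsConjAction φ l c) (hσ : σ ∈ torsionFixingSubgroup φ l E)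
    (hf : l ∣ f) : c f σ = 1 := by
  simpa using hc f σ hσ 0 Fin.elim0 (fun i => i.elim0) (by simpa using hf) Fin.elim0
    (fun i => i.elim0)

theorem eq_conj (hc : IsConjAction φ l c) (hσ : σ ∈ torsionFixingSubgroup φ l E)
    (hf : IsCoprime f l) (hs : ActsOnTorsionAs φ l s f) : c f σ = s * σ * s⁻¹ := by
  simpa using hc f σ hσ 1 (fun _ => f) (fun _ => hf) (by simp) (fun _ => s) (fun _ => hs)

end IsConjAction

theorem ActsOnTorsionAs.exists_extension [Normal L Ω] [Normal L E] {F : IntermediateField L Ω}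
    (hF : divisionField L φ l ⊥ ≤ F) {σ : Gal(F/L)} {u : A} (hσ : ActsOnTorsionAs φ l σ u) :
    ∃ s : Gal(E/L), ActsOnTorsionAs φ l s u := by
  refine ⟨(σ.liftNormal Ω).restrictNormal E, fun x hx => ?_⟩
  have hxF : (x : Ω) ∈ F := hF (mem_divisionField_bot hx)
  calc ((σ.liftNormal Ω).restrictNormal E x : Ω)
      = σ.liftNormal Ω x := (σ.liftNormal Ω).restrictNormal_commutes E x
    _ = σ ⟨x, hxF⟩ := σ.liftNormal_commutes Ω ⟨x, hxF⟩
    _ = φ u x := hσ ⟨x, hxF⟩ hx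

namespace IsPolynomialAction

theorem apply_algEquiv_eq (hφ : IsPolynomialAction L φ) {f : A} {x y : E} (h : φ f (x : Ω) = y)
    (σ : Gal(E/L)) : φ f (σ x : Ω) = σ y :=
  hφ.apply_eq_of_apply_eq f E.val (E.val.comp σ.toAlgHom) h

theorem apply_algEquiv_eq_algebraMap (hφ : IsPolynomialAction L φ) {f : A} {x : E} {a : L}
    (h : φ f (x : Ω) = algebraMap L Ω a) (σ : Gal(E/L)) : φ f (σ x : Ω) = algebraMap L Ω a := by
  simpa using hφ.apply_algEquiv_eq (y := algebraMap L E a) h σ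

theorem normal_torsionFixingSubgroup (hφ : IsPolynomialAction L φ) :
    (torsionFixingSubgroup φ l E).Normal where
  conj_mem σ hσ s x hx := by
    have hsx : φ l (s⁻¹ x : Ω) = 0 := by
      simpa using hφ.apply_algEquiv_eq_algebraMap (a := 0) (by simpa using hx) s⁻¹
    rw [AlgEquiv.mul_apply, AlgEquiv.mul_apply, hσ _ hsx]
    exact s.apply_symm_apply x

end IsPolynomialAction

theorem torsionFixingSubgroup_eq_fixingSubgroup (hE : divisionField L φ l ⊥ ≤ E) :
    torsionFixingSubgroup φ l E = (restrict hE).fixingSubgroup := by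
  refine le_antisymm ((le_iff_le _ _).1 ?_) fun σ hσ x hx =>
    (mem_fixingSubgroup_iff _ σ).1 hσ x ((mem_restrict hE x).2 (mem_divisionField_bot hx))
  suffices h : divisionField L φ l ⊥ ≤ lift (fixedField (torsionFixingSubgroup φ l E)) from
    fun x hx => (mem_lift x).1 (h ((mem_restrict hE x).1 hx))
  refine adjoin_le_iff.2 fun x hx => ?_
  exact (mem_lift (⟨x, hE (mem_divisionField hx)⟩ : E)).2
    ((mem_fixedField_iff _ _).2 fun σ hσ => hσ _ hx)

theorem coe_mem_torsionField_iff [IsGalois L E] (hE : divisionField L φ l ⊥ ≤ E) {x : E} :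
    (x : Ω) ∈ divisionField L φ l ⊥ ↔ ∀ σ ∈ torsionFixingSubgroup φ l E, σ x = x := by
  rw [← mem_restrict hE, ← InfiniteGalois.fixedField_fixingSubgroup (restrict hE),
    ← torsionFixingSubgroup_eq_fixingSubgroup hE, mem_fixedField_iff]

/-- The Kummer pairing `⟨σ, a⟩ = σ α - α` with `φ_l(α) = a`, for a choice of `α ∈ E`; it is a junk
value if there is no such `α`. -/
noncomputable def kummerPairing (φ : A →+* AddMonoid.End Ω) (l : A) {E : IntermediateField L Ω}
    (σ : Gal(E/L)) (a : Ω) : Ω :=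
  let α := Function.invFun (fun x : E => φ l (x : Ω)) a
  σ α - α

section kummerPairing

variable {σ τ s : Gal(E/L)} {a b : Ω} {α β : E}

theorem kummerPairing_eq (hσ : σ ∈ torsionFixingSubgroup φ l E) (hα : φ l (α : Ω) = a) :
    kummerPairing φ l σ a = σ α - α := by
  set α₀ := Function.invFun (fun x : E => φ l (x : Ω)) a
  have hroot : φ l (α₀ : Ω) = a := Function.invFun_eq (f := fun x : E => φ l (x : Ω)) ⟨α, hα⟩
  have hfix : σ (α₀ - α) = α₀ - α :=
    hσ _ (by rw [AddSubgroupClass.coe_sub, map_sub, hroot, hα, sub_self])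
  have hdiff : σ α₀ - α₀ = σ α - α := by
    rw [map_sub] at hfix
    linear_combination hfix
  exact congrArg E.val hdiff

theorem kummerPairing_one : kummerPairing φ l (1 : Gal(E/L)) a = 0 := sub_self _

theorem kummerPairing_add (hσ : σ ∈ torsionFixingSubgroup φ l E) (hα : φ l (α : Ω) = a)
    (hβ : φ l (β : Ω) = b) :
    kummerPairing φ l σ (a + b) = kummerPairing φ l σ a + kummerPairing φ l σ b := by
  have hαβ : φ l ((α + β : E) : Ω) = a + b := by
    rw [IntermediateField.coe_add, map_add, hα, hβ]
  rw [kummerPairing_eq hσ hα, kummerPairing_eq hσ hβ, kummerPairing_eq hσ hαβ, map_add,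
    IntermediateField.coe_add, IntermediateField.coe_add, add_sub_add_comm]

theorem kummerPairing_eq_zero_iff (hσ : σ ∈ torsionFixingSubgroup φ l E)
    (hα : φ l (α : Ω) = a) : kummerPairing φ l σ a = 0 ↔ σ α = α := by
  rw [kummerPairing_eq hσ hα, sub_eq_zero, Subtype.coe_inj]

theorem eq_one_of_kummerPairing_eq_zero {σ : Gal(divisionField L φ l Γ/L)}
    (hσ : σ ∈ torsionFixingSubgroup φ l _) (h : ∀ a ∈ Γ, kummerPairing φ l σ a = 0) : σ = 1 := by
  have hgen : σ.toAlgHom = AlgHom.id L _ := adjoin_algHom_ext L fun x hx =>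
    (kummerPairing_eq_zero_iff hσ rfl).1 (h (φ l x) hx)
  exact AlgEquiv.ext fun x => DFunLike.congr_fun hgen x

theorem kummerPairing_eq_zero_iff_exists_torsionField [IsGalois L E]
    (hE : divisionField L φ l ⊥ ≤ E) (hα : φ l (α : Ω) = a) :
    (∀ σ ∈ torsionFixingSubgroup φ l E, kummerPairing φ l σ a = 0) ↔
      ∃ β ∈ divisionField L φ l ⊥, φ l β = a := by
  constructor
  · intro h
    exact ⟨α, (coe_mem_torsionField_iff hE).2 fun σ hσ =>
      (kummerPairing_eq_zero_iff hσ hα).1 (h σ hσ), hα⟩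
  · rintro ⟨β, hβ, rfl⟩ σ hσ
    exact (kummerPairing_eq_zero_iff (α := ⟨β, hE hβ⟩) hσ rfl).2
      ((coe_mem_torsionField_iff hE).1 hβ σ hσ)

namespace IsPolynomialAction

theorem kummerPairing_apply (hφ : IsPolynomialAction L φ) (f : A)
    (hσ : σ ∈ torsionFixingSubgroup φ l E) (hα : φ l (α : Ω) = a) :
    kummerPairing φ l σ (φ f a) = φ f (kummerPairing φ l σ a) := by
  have hfα : φ l (φ f α) = φ f a := by rw [action_apply_comm, hα]
  rw [kummerPairing_eq hσ hα, map_sub,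
    hφ.apply_algEquiv_eq (y := ⟨φ f α, hφ.apply_mem f α.2⟩) rfl]
  exact kummerPairing_eq hσ hfα

section BaseFieldValue

variable {a : L}

theorem apply_kummerPairing (hφ : IsPolynomialAction L φ) (hσ : σ ∈ torsionFixingSubgroup φ l E)
    (hα : φ l (α : Ω) = algebraMap L Ω a) : φ l (kummerPairing φ l σ (algebraMap L Ω a)) = 0 := by
  rw [kummerPairing_eq hσ hα, map_sub, hφ.apply_algEquiv_eq_algebraMap hα, hα, sub_self]

theorem kummerPairing_mul (hφ : IsPolynomialAction L φ) (hσ : σ ∈ torsionFixingSubgroup φ l E)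
    (hτ : τ ∈ torsionFixingSubgroup φ l E) (hα : φ l (α : Ω) = algebraMap L Ω a) :
    kummerPairing φ l (σ * τ) (algebraMap L Ω a) =
      kummerPairing φ l σ (algebraMap L Ω a) + kummerPairing φ l τ (algebraMap L Ω a) := by
  rw [kummerPairing_eq (mul_mem hσ hτ) hα, kummerPairing_eq hτ hα,
    kummerPairing_eq hσ (hφ.apply_algEquiv_eq_algebraMap hα τ), AlgEquiv.mul_apply,
    sub_add_sub_cancel]

theorem kummerPairing_conj (hφ : IsPolynomialAction L φ) {u : A} (hs : ActsOnTorsionAs φ l s u)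
    (hσ : σ ∈ torsionFixingSubgroup φ l E) (hα : φ l (α : Ω) = algebraMap L Ω a) :
    kummerPairing φ l (s * σ * s⁻¹) (algebraMap L Ω a) =
      φ u (kummerPairing φ l σ (algebraMap L Ω a)) := by
  have hs_inv : φ l (s⁻¹ α : Ω) = algebraMap L Ω a := hφ.apply_algEquiv_eq_algebraMap hα s⁻¹
  have hpair := kummerPairing_eq hσ hs_inv
  have htors : φ l ((σ (s⁻¹ α) - s⁻¹ α : E) : Ω) = 0 := by
    rw [AddSubgroupClass.coe_sub, ← hpair, hφ.apply_kummerPairing hσ hα]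
  calc kummerPairing φ l (s * σ * s⁻¹) (algebraMap L Ω a)
      = s (σ (s⁻¹ α)) - α :=
        kummerPairing_eq (hφ.normal_torsionFixingSubgroup.conj_mem σ hσ s) hα
    _ = s (σ (s⁻¹ α) - s⁻¹ α) := by
        rw [map_sub, AddSubgroupClass.coe_sub, show s (s⁻¹ α) = α from s.apply_symm_apply α]
    _ = φ u (kummerPairing φ l σ (algebraMap L Ω a)) := by
        rw [hs _ htors, AddSubgroupClass.coe_sub, hpair]

theorem kummerPairing_conjAction (hφ : IsPolynomialAction L φ)
    (hlmax : (Ideal.span {l}).IsMaximal) {c : A → Gal(E/L) → Gal(E/L)}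
    (hc : IsConjAction φ l c) {f : A} (hext : ¬ l ∣ f → ∃ s : Gal(E/L), ActsOnTorsionAs φ l s f)
    (hσ : σ ∈ torsionFixingSubgroup φ l E) (hα : φ l (α : Ω) = algebraMap L Ω a) :
    kummerPairing φ l (c f σ) (algebraMap L Ω a) =
      φ f (kummerPairing φ l σ (algebraMap L Ω a)) := by
  by_cases hf : l ∣ f
  · rw [hc.eq_one_of_dvd hσ hf, kummerPairing_one]
    obtain ⟨g, rfl⟩ := hf
    have hlg (x : Ω) : φ (l * g) x = φ g (φ l x) := by rw [mul_comm, map_mul]; rfl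
    rw [hlg, hφ.apply_kummerPairing hσ hα, map_zero]
  · obtain ⟨s, hs⟩ := hext hf
    rw [hc.eq_conj hσ (isCoprime_of_isMaximal_span_singleton hlmax hf) hs,
      hφ.kummerPairing_conj hs hσ hα]

end BaseFieldValue

end IsPolynomialAction

end kummerPairing

end PolynomialAction

section GaModule

variable {A L Ω : Type*} [CommRing A] [Field L] [Field Ω] [Algebra A L] [Algebra L Ω]

/-- `P` is a polynomial `φ_f(X)` over `L` giving the action of `f` on `Ω`, and `f` acts on the
tangent space (the derivative of `P`) through the structure map `A → L`. -/
def IsActionPolynomial (φ : A →+* AddMonoid.End Ω) (f : A) (P : L[X]) : Prop :=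
  (∀ x, φ f x = aeval x P) ∧ derivative P = C (algebraMap A L f)

/-- `φ` is (on points in `Ω`) an `A`-module structure over the `A`-field `L` on the additive group
`𝔾ₐ`, inducing the structure map `A → L` on the tangent space. For `A = 𝔽_q[T]`, Drinfeld modules
of every rank are of this kind. -/
def IsGaModule (L : Type*) [Field L] [Algebra A L] [Algebra L Ω]
    (φ : A →+* AddMonoid.End Ω) : Prop :=
  ∀ f, ∃ P : L[X], IsActionPolynomial φ f P

variable {φ : A →+* AddMonoid.End Ω} {l : A} {Γ : AddSubgroup Ω}

namespace IsActionPolynomial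

variable {f g : A} {P Q : L[X]}

theorem add (hP : IsActionPolynomial φ f P) (hQ : IsActionPolynomial φ g Q) :
    IsActionPolynomial φ (f + g) (P + Q) := by
  refine ⟨fun x => ?_, by rw [derivative_add, hP.2, hQ.2, map_add, C_add]⟩
  rw [map_add, map_add, ← hP.1, ← hQ.1]
  rfl

theorem mul (hP : IsActionPolynomial φ f P) (hQ : IsActionPolynomial φ g Q) :
    IsActionPolynomial φ (f * g) (P.comp Q) := by
  refine ⟨fun x => ?_, ?_⟩
  · rw [map_mul, aeval_comp, ← hQ.1, ← hP.1]
    rfl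
  · rw [derivative_comp, hP.2, hQ.2, C_comp, ← C_mul, ← map_mul, mul_comm]

end IsActionPolynomial

namespace IsGaModule

theorem isPolynomialAction (hφ : IsGaModule L φ) : IsPolynomialAction L φ :=
  fun f => (hφ f).imp fun _ hP => hP.1

theorem surjective [IsSepClosed Ω] (hφ : IsGaModule L φ) (hl : algebraMap A L l ≠ 0) :
    Function.Surjective (φ l) := by
  intro a
  obtain ⟨P, hP, hP'⟩ := hφ l
  have hder : derivative (P.map (algebraMap L Ω)) = C (algebraMap L Ω (algebraMap A L l)) := by
    rw [derivative_map, hP', map_C]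
  have hl' : algebraMap L Ω (algebraMap A L l) ≠ 0 := (_root_.map_ne_zero _).2 hl
  obtain ⟨α, hα⟩ := IsSepClosed.exists_root (P.map (algebraMap L Ω) - C a)
    (degree_ne_zero_of_derivative_ne_zero <| by simpa [hder] using hl)
    (separable_sub_C_of_derivative_eq_C hder hl'.isUnit a)
  refine ⟨α, ?_⟩
  rwa [IsRoot.def, eval_sub, eval_C, sub_eq_zero, eval_map_algebraMap, ← hP] at hα

theorem isSeparable_of_apply_eq_algebraMap (hφ : IsGaModule L φ)
    (hl : algebraMap A L l ≠ 0) {x : Ω} {a : L} (h : φ l x = algebraMap L Ω a) :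
    IsSeparable L x := by
  obtain ⟨P, hP, hP'⟩ := hφ l
  refine (separable_sub_C_of_derivative_eq_C hP' hl.isUnit a).of_dvd (minpoly.dvd _ _ ?_)
  rw [map_sub, aeval_C, ← hP, h, sub_self]

theorem exists_apply_eq_of_mem [IsSepClosed Ω] (hφ : IsGaModule L φ) (hl : algebraMap A L l ≠ 0)
    {a : Ω} (ha : a ∈ Γ) : ∃ α : divisionField L φ l Γ, φ l (α : Ω) = a := by
  obtain ⟨α, rfl⟩ := hφ.surjective hl a
  exact ⟨⟨α, mem_divisionField ha⟩, rfl⟩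

theorem isGalois_divisionField [Normal L Ω] (hφ : IsGaModule L φ) (hl : algebraMap A L l ≠ 0)
    (hΓ : (Γ : Set Ω) ⊆ Set.range (algebraMap L Ω)) : IsGalois L (divisionField L φ l Γ) where
  to_isSeparable := (isSeparable_adjoin_iff_isSeparable _ _).2 fun _ hx =>
    let ⟨_, ha⟩ := hΓ hx
    hφ.isSeparable_of_apply_eq_algebraMap hl ha.symm
  to_normal := hφ.isPolynomialAction.normal_divisionField hΓ

end IsGaModule

theorem drinfeld_kummer_pairing_general [IsSepClosed Ω] [Normal L Ω] (hφ : IsGaModule L φ)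
    (hl : algebraMap A L l ≠ 0) (hlmax : (Ideal.span {l}).IsMaximal)
    (hGal : ∀ u, ¬ l ∣ u → ∃ σ : Gal(divisionField L φ l ⊥/L), ActsOnTorsionAs φ l σ u)
    (hΓL : (Γ : Set Ω) ⊆ Set.range (algebraMap L Ω))
    {c : A → Gal(divisionField L φ l Γ/L) → Gal(divisionField L φ l Γ/L)}
    (hc : IsConjAction φ l c) :
    ∃ p : Gal(divisionField L φ l Γ/L) → Ω → Ω,
      (∀ σ ∈ torsionFixingSubgroup φ l _, ∀ a ∈ Γ, ∀ α : divisionField L φ l Γ,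
        φ l (α : Ω) = a → p σ a = σ α - α) ∧
      (∀ σ ∈ torsionFixingSubgroup φ l _, ∀ a ∈ Γ, φ l (p σ a) = 0) ∧
      (∀ σ τ, σ ∈ torsionFixingSubgroup φ l _ → τ ∈ torsionFixingSubgroup φ l _ → ∀ a ∈ Γ,
        p (σ * τ) a = p σ a + p τ a) ∧
      (∀ f, ∀ σ ∈ torsionFixingSubgroup φ l _, ∀ a ∈ Γ, p (c f σ) a = φ f (p σ a)) ∧
      (∀ σ ∈ torsionFixingSubgroup φ l _, ∀ a ∈ Γ, ∀ b ∈ Γ, p σ (a + b) = p σ a + p σ b) ∧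
      (∀ f, ∀ σ ∈ torsionFixingSubgroup φ l _, ∀ a ∈ Γ, p σ (φ f a) = φ f (p σ a)) ∧
      (∀ σ ∈ torsionFixingSubgroup φ l _, (∀ a ∈ Γ, p σ a = 0) → σ = 1) ∧
      (∀ a ∈ Γ, (∀ σ ∈ torsionFixingSubgroup φ l _, p σ a = 0) ↔
        ∃ β ∈ divisionField L φ l ⊥, φ l β = a) := by
  have hpoly := hφ.isPolynomialAction
  have : IsGalois L (divisionField L φ l Γ) := hφ.isGalois_divisionField hl hΓL
  have hext (u : A) (hu : ¬ l ∣ u) : ∃ s : Gal(divisionField L φ l Γ/L), ActsOnTorsionAs φ l s u :=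
    let ⟨_, hσ⟩ := hGal u hu
    hσ.exists_extension le_rfl
  have hroot (a : Ω) (ha : a ∈ Γ) :
      ∃ (b : L) (α : divisionField L φ l Γ), φ l (α : Ω) = algebraMap L Ω b ∧
        algebraMap L Ω b = a := by
    obtain ⟨b, rfl⟩ := hΓL ha
    exact (hφ.exists_apply_eq_of_mem hl ha).elim fun α hα => ⟨b, α, hα, rfl⟩
  refine ⟨kummerPairing φ l, fun σ hσ a _ α hα => kummerPairing_eq hσ hα, ?_, ?_, ?_, ?_, ?_,
    fun σ hσ h => eq_one_of_kummerPairing_eq_zero hσ h, ?_⟩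
  · intro σ hσ a ha
    obtain ⟨b, α, hα, rfl⟩ := hroot a ha
    exact hpoly.apply_kummerPairing hσ hα
  · intro σ τ hσ hτ a ha
    obtain ⟨b, α, hα, rfl⟩ := hroot a ha
    exact hpoly.kummerPairing_mul hσ hτ hα
  · intro f σ hσ a ha
    obtain ⟨b, α, hα, rfl⟩ := hroot a ha
    exact hpoly.kummerPairing_conjAction hlmax hc (hext f) hσ hα
  · intro σ hσ a ha b hb
    obtain ⟨_, α, hα, rfl⟩ := hroot a ha
    obtain ⟨_, β, hβ, rfl⟩ := hroot b hb
    exact kummerPairing_add hσ hα hβ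
  · intro f σ hσ a ha
    obtain ⟨b, α, hα, rfl⟩ := hroot a ha
    exact hpoly.kummerPairing_apply f hσ hα
  · intro a ha
    obtain ⟨b, α, hα, rfl⟩ := hroot a ha
    exact kummerPairing_eq_zero_iff_exists_torsionField (divisionField_mono bot_le) hα

end GaModule

theorem algebraMap_polynomial_injective {F : Type*} [Field F] (L : Type*) [Field L]
    [Algebra (RatFunc F) L] [Algebra F[X] L] [IsScalarTower F[X] (RatFunc F) L] :
    Function.Injective (algebraMap F[X] L) := by
  rw [IsScalarTower.algebraMap_eq F[X] (RatFunc F) L]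
  exact (algebraMap (RatFunc F) L).injective.comp (RatFunc.algebraMap_injective F)

theorem IsDrinfeldRankOne.isGaModule {Fq : Type} [Field Fq] [Fintype Fq]
    {L : IntermediateField (RatFunc Fq) (AlgebraicClosure (RatFunc Fq))}
    {φ : Polynomial Fq →+* AddMonoid.End (AlgebraicClosure (RatFunc Fq))}
    (hφ : IsDrinfeldRankOne L φ) : IsGaModule L φ := by
  obtain ⟨a, haL, -, hX, hC⟩ := hφ
  have hcard : (Fintype.card Fq : L) = 0 := by
    simpa only [map_natCast, map_zero] using
      congrArg ((algebraMap Fq[X] L).comp C) (FiniteField.cast_card_eq_zero Fq)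
  have hconst (c : Fq) : IsActionPolynomial φ (C c) (C (algebraMap Fq[X] L (C c)) * X) := by
    refine ⟨fun x => ?_, by simp⟩
    rw [hC, map_mul, aeval_C, aeval_X, ← RatFunc.algebraMap_C]
    rfl
  have hvar : IsActionPolynomial φ X
      (C (algebraMap Fq[X] L X) * X + C ⟨a, haL⟩ * X ^ Fintype.card Fq) := by
    refine ⟨fun x => ?_, by simp [derivative_X_pow, hcard]⟩
    rw [hX, map_add, map_mul, map_mul, aeval_C, aeval_C, aeval_X, map_pow, aeval_X,
      ← RatFunc.algebraMap_X]
    rfl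
  intro f
  induction f using Polynomial.induction_on with
  | C c => exact ⟨_, hconst c⟩
  | add f g hf hg => exact ⟨_, hf.choose_spec.add hg.choose_spec⟩
  | monomial n c ih => exact ⟨_, by simpa only [pow_succ, mul_assoc] using ih.choose_spec.mul hvar⟩

/-- **Proposition 3.3.**
Let `l` be a monic irreducible polynomial of `A` such that `φ` has good reduction at
the primes of `L` lying over `l` and `l` is unramified in the maximal separable
subextension `L_s/k` (encoded by `GaloisGroupOfTorsionIsFull`).  Let `Γ` be a finitely
generated `A`-submodule of `(L,+)`, `L_l = L(Λ_l^φ)`, `L_{l,Γ} = L(Λ_l^φ, (1/l)Γ)` and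
`H_{l,Γ} = Gal(L_{l,Γ}/L_l)` with its natural `A`-module structure `c`.  The map
`H_{l,Γ} × Γ → Λ_l^φ`, `(σ, a) ↦ ⟨σ, a⟩ = σα - α` (where `φ_l(α) = a`) is well defined
and `A`-bilinear; its kernel on the left is `{1}` and its kernel on the right is
`Γ ∩ φ_l(L_l)`. -/
theorem drinfeld_kummer_pairing
    {Fq : Type} [Field Fq] [Fintype Fq]
    (L : IntermediateField (RatFunc Fq) (AlgebraicClosure (RatFunc Fq)))
    [FiniteDimensional (RatFunc Fq) (↥L)]
    (φ : Polynomial Fq →+* AddMonoid.End (AlgebraicClosure (RatFunc Fq)))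
    (hφ : IsDrinfeldRankOne L φ)
    (l : Polynomial Fq) (hlm : l.Monic) (hlirr : Irreducible l)
    (Ll : IntermediateField (↥L) (AlgebraicClosure (RatFunc Fq)))
    (hLl : Ll = adjoin (↥L) {x | φ l x = 0})
    (hGal : GaloisGroupOfTorsionIsFull φ l Ll)
    -- Γ : a finitely generated A-submodule of (L, +)
    (Γ : AddSubgroup (AlgebraicClosure (RatFunc Fq)))
    (hΓL : ∀ x ∈ Γ, x ∈ L)
    (hΓA : ∀ (f : Polynomial Fq), ∀ x ∈ Γ, φ f x ∈ Γ)
    (hΓfg : ∃ (n : ℕ) (a : Fin n → AlgebraicClosure (RatFunc Fq)), (∀ i, a i ∈ Γ) ∧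
      ∀ x ∈ Γ, ∃ g : Fin n → Polynomial Fq, x = ∑ i, φ (g i) (a i))
    -- L_{l,Γ} = L(Λ_l^φ, (1/l)Γ)
    (E : IntermediateField (↥L) (AlgebraicClosure (RatFunc Fq)))
    (hE : E = adjoin (↥L) {x | φ l x ∈ Γ})
    -- the natural A-module structure on H_{l,Γ} = Gal(L_{l,Γ}/L_l)
    (c : Polynomial Fq → (↥E ≃ₐ[↥L] ↥E) → (↥E ≃ₐ[↥L] ↥E))
    (hc : IsDecompConjActionD φ l c)
    (hcH : ∀ f τ, FixesTorsionD φ l τ → FixesTorsionD φ l (c f τ)) :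
    ∃ p : (↥E ≃ₐ[↥L] ↥E) → AlgebraicClosure (RatFunc Fq) →
        AlgebraicClosure (RatFunc Fq),
      -- p computes the pairing ⟨σ, a⟩ = σα - α (independently of the chosen root α)
      (∀ σ, FixesTorsionD φ l σ → ∀ a ∈ Γ, ∀ α : ↥E,
        φ l (α : AlgebraicClosure (RatFunc Fq)) = a →
        p σ a = (σ α : AlgebraicClosure (RatFunc Fq)) - (α : AlgebraicClosure (RatFunc Fq))) ∧
      -- with values in Λ_l^φ
      (∀ σ, FixesTorsionD φ l σ → ∀ a ∈ Γ, φ l (p σ a) = 0) ∧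
      -- A-bilinearity
      (∀ σ τ, FixesTorsionD φ l σ → FixesTorsionD φ l τ → ∀ a ∈ Γ,
        p (σ * τ) a = p σ a + p τ a) ∧
      (∀ f σ, FixesTorsionD φ l σ → ∀ a ∈ Γ, p (c f σ) a = φ f (p σ a)) ∧
      (∀ σ, FixesTorsionD φ l σ → ∀ a ∈ Γ, ∀ b ∈ Γ, p σ (a + b) = p σ a + p σ b) ∧
      (∀ f σ, FixesTorsionD φ l σ → ∀ a ∈ Γ, p σ (φ f a) = φ f (p σ a)) ∧
      -- the kernel on the left is {1}
      (∀ σ, FixesTorsionD φ l σ → (∀ a ∈ Γ, p σ a = 0) → σ = 1) ∧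
      -- the kernel on the right is Γ ∩ φ_l(L_l)
      (∀ a ∈ Γ, (∀ σ, FixesTorsionD φ l σ → p σ a = 0) ↔
        ∃ β : AlgebraicClosure (RatFunc Fq), β ∈ Ll ∧ φ l β = a) := by
  subst hLl hE
  exact drinfeld_kummer_pairing_general hφ.isGaModule
    ((map_ne_zero_iff _ (algebraMap_polynomial_injective L)).2 hlirr.ne_zero)
    (PrincipalIdealRing.isMaximal_of_irreducible hlirr) hGal.2 (fun x hx => ⟨⟨x, hΓL x hx⟩, rfl⟩) hc
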